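/- Let q ≥ 2 and let Θ be the linear map on V_[A] determined by Θ(A_{σ,σ·τ}) = Σ_{σ̂∈N_τ∩C_σ} A_{σ̂,iσ̂·τ} − Σ_{σ̂∈N_τ∩N_σ} A_{σ̂,iσ̂·τ} for τ ∈ σ_q and σ ∈ C_τ. Then Θ has trivial kernel and maps pairwise orthogonal vectors of V_[A] to pairwise orthogonal vectors; consequently Θ is a linear isomorphism from V_[A] onto V^⊥_{adj}, the orthogonal complement of V_{adj} inside V_{A} (in particular dim V^⊥_{adj} = dim V_[A]). -/

import Mathlib

open Matrix MeasureTheory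
open scoped Kronecker

noncomputable section

namespace CliffordPaper

/-- The single-qubit Pauli matrices `1, X, Y, Z`. -/
def pauli1 : Fin 4 → Matrix (Fin 2) (Fin 2) ℂ :=
  ![1, !![0, 1; 1, 0], !![0, -Complex.I; Complex.I, 0], !![1, 0; 0, -1]]

/-- Index type for the computational basis of `q` qubits. -/
abbrev Idx (q : ℕ) := Fin q → Fin 2

/-- The space `M_d` of `d × d` complex matrices, `d = 2^q`. -/
abbrev Mat (q : ℕ) := Matrix (Idx q) (Idx q) ℂ

/-- The space `M_d ⊗ M_d`, realized as matrices indexed by the product index set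
(the tensor factors combine via the Kronecker product `⊗ₖ`). -/
abbrev BMat (q : ℕ) := Matrix (Idx q × Idx q) (Idx q × Idx q) ℂ

/-- The `q`-fold Kronecker product of single-qubit Paulis with labels `a`. -/
def PauliOp {q : ℕ} (a : Fin q → Fin 4) : Mat q :=
  Matrix.of fun x y => ∏ i, pauli1 (a i) (x i) (y i)

/-- `√d` as a complex number, where `d = 2^q`. -/
def sqrtd (q : ℕ) : ℂ := (Real.sqrt (2 ^ q) : ℝ)

/-- The set `σ̂_q` of normalized Pauli operators. -/
def sigmaHat (q : ℕ) : Set (Mat q) :=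
  {M | ∃ a : Fin q → Fin 4, M = (sqrtd q)⁻¹ • PauliOp a}

/-- The normalized identity `σ₀ = 1/√d`. -/
def sigma0 (q : ℕ) : Mat q := (sqrtd q)⁻¹ • (1 : Mat q)

/-- `σ_q = σ̂_q \ {σ₀}`. -/
def sigmaSet (q : ℕ) : Set (Mat q) := sigmaHat q \ {sigma0 q}

/-- `N_τ`: the normalized nonidentity Paulis anticommuting with `τ`. -/
def NSet {q : ℕ} (τ : Mat q) : Set (Mat q) :=
  {σ | σ ∈ sigmaSet q ∧ σ * τ + τ * σ = 0}

/-- `C_τ`: the normalized nonidentity Paulis distinct from `τ` commuting with `τ`. -/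
def CSet {q : ℕ} (τ : Mat q) : Set (Mat q) :=
  {σ | σ ∈ sigmaSet q ∧ σ ≠ τ ∧ σ * τ = τ * σ}

/-- `Ĉ_τ`: the normalized Paulis commuting with `τ`. -/
def CHatSet {q : ℕ} (τ : Mat q) : Set (Mat q) :=
  {σ | σ ∈ sigmaHat q ∧ σ * τ = τ * σ}

/-- The normalized product `σ·τ = √d στ`. -/
def nprod {q : ℕ} (σ τ : Mat q) : Mat q := sqrtd q • (σ * τ)

/-- The Clifford normalizer `𝒩_q`: unitaries mapping normalized Paulis to
signed normalized Paulis under conjugation. -/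
def Cliff (q : ℕ) : Set (Mat q) :=
  {U | U ∈ Matrix.unitaryGroup (Idx q) ℂ ∧
    ∀ σ ∈ sigmaHat q, ∃ τ ∈ sigmaHat q, U * σ * Uᴴ = τ ∨ U * σ * Uᴴ = -τ}

/-- The two-copy representation `φ⊗²(U) : A ⊗ B ↦ (UAU†) ⊗ (UBU†)`, extended linearly. -/
def twoCopy {q : ℕ} (U : Mat q) : BMat q →ₗ[ℂ] BMat q where
  toFun M := (U ⊗ₖ U) * M * (U ⊗ₖ U)ᴴ
  map_add' M N := by
    show (U ⊗ₖ U) * (M + N) * (U ⊗ₖ U)ᴴ = (U ⊗ₖ U) * M * (U ⊗ₖ U)ᴴ + (U ⊗ₖ U) * N * (U ⊗ₖ U)ᴴ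
    rw [Matrix.mul_add, Matrix.add_mul]
  map_smul' c M := by
    show (U ⊗ₖ U) * (c • M) * (U ⊗ₖ U)ᴴ = c • ((U ⊗ₖ U) * M * (U ⊗ₖ U)ᴴ)
    rw [Matrix.mul_smul, Matrix.smul_mul]

/-- The Hilbert–Schmidt inner product `⟨A, B⟩ = tr(A† B)`. -/
def hs {q : ℕ} (A B : BMat q) : ℂ := (Aᴴ * B).trace

/-- A subspace is invariant under the two-copy representation of `𝒩_q`. -/
def IsInvariant (q : ℕ) (W : Submodule ℂ (BMat q)) : Prop :=
  ∀ U ∈ Cliff q, ∀ v ∈ W, twoCopy U v ∈ W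

/-- A nonzero invariant subspace carries an irreducible subrepresentation. -/
def CarriesIrred (q : ℕ) (W : Submodule ℂ (BMat q)) : Prop :=
  W ≠ ⊥ ∧ IsInvariant q W ∧ ∀ W' ≤ W, IsInvariant q W' → W' = ⊥ ∨ W' = W

/-- Two invariant subspaces carry equivalent subrepresentations: there is a linear
isomorphism between them intertwining the two-copy representation. -/
def EquivRep (q : ℕ) (W W' : Submodule ℂ (BMat q)) : Prop :=
  ∃ T : BMat q →ₗ[ℂ] BMat q, Submodule.map T W = W' ∧
    (∀ x ∈ W, T x = 0 → x = 0) ∧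
    ∀ U ∈ Cliff q, ∀ x ∈ W, T (twoCopy U x) = twoCopy U (T x)

/-- `S_{σ,τ} = (σ⊗τ + τ⊗σ)/√2`. -/
def SVec {q : ℕ} (σ τ : Mat q) : BMat q :=
  ((Real.sqrt 2 : ℂ))⁻¹ • (σ ⊗ₖ τ + τ ⊗ₖ σ)

/-- `A_{σ,τ} = (σ⊗τ − τ⊗σ)/√2`. -/
def AVec {q : ℕ} (σ τ : Mat q) : BMat q :=
  ((Real.sqrt 2 : ℂ))⁻¹ • (σ ⊗ₖ τ - τ ⊗ₖ σ)

/-- The trivial sector `V_id`. -/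
def Vid (q : ℕ) : Submodule ℂ (BMat q) :=
  Submodule.span ℂ {sigma0 q ⊗ₖ sigma0 q}

/-- The right adjoint sector `V_r`. -/
def Vr (q : ℕ) : Submodule ℂ (BMat q) :=
  Submodule.span ℂ {M | ∃ τ ∈ sigmaSet q, M = sigma0 q ⊗ₖ τ}

/-- The left adjoint sector `V_l`. -/
def Vl (q : ℕ) : Submodule ℂ (BMat q) :=
  Submodule.span ℂ {M | ∃ τ ∈ sigmaSet q, M = τ ⊗ₖ sigma0 q}

/-- The diagonal sector `V_d`. -/
def Vdiag (q : ℕ) : Submodule ℂ (BMat q) :=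
  Submodule.span ℂ {M | ∃ τ ∈ sigmaSet q, M = τ ⊗ₖ τ}

/-- The symmetric commuting sector `V_[S]`. -/
def VScom (q : ℕ) : Submodule ℂ (BMat q) :=
  Submodule.span ℂ {M | ∃ τ ∈ sigmaSet q, ∃ σ ∈ CSet τ, M = SVec σ τ}

/-- The symmetric anti-commuting sector `V_{S}`. -/
def VSanti (q : ℕ) : Submodule ℂ (BMat q) :=
  Submodule.span ℂ {M | ∃ τ ∈ sigmaSet q, ∃ σ ∈ NSet τ, M = SVec σ τ}

/-- The antisymmetric commuting sector `V_[A]`. -/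
def VAcom (q : ℕ) : Submodule ℂ (BMat q) :=
  Submodule.span ℂ {M | ∃ τ ∈ sigmaSet q, ∃ σ ∈ CSet τ, M = AVec σ τ}

/-- The antisymmetric anti-commuting sector `V_{A}`. -/
def VAanti (q : ℕ) : Submodule ℂ (BMat q) :=
  Submodule.span ℂ {M | ∃ τ ∈ sigmaSet q, ∃ σ ∈ NSet τ, M = AVec σ τ}

/-- `V_[A]` presented with the spanning vectors `A_{σ,σ·τ}`, `σ ∈ C_τ`. -/
def VAcom' (q : ℕ) : Submodule ℂ (BMat q) :=
  Submodule.span ℂ {M | ∃ τ ∈ sigmaSet q, ∃ σ ∈ CSet τ, M = AVec σ (nprod σ τ)}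

/-- `V_0 = span{Σ_{σ∈σ_q} σ⊗σ}`. -/
def V0diag (q : ℕ) : Submodule ℂ (BMat q) :=
  Submodule.span ℂ {∑ᶠ σ ∈ sigmaSet q, σ ⊗ₖ σ}

/-- `V_1`, the "positive" part of the diagonal sector. -/
def V1diag (q : ℕ) : Submodule ℂ (BMat q) :=
  Submodule.span ℂ {v | ∃ lam : Mat q → ℂ,
    v = ∑ᶠ σ ∈ sigmaSet q, lam σ • (σ ⊗ₖ σ) ∧
    (∑ᶠ σ ∈ sigmaSet q, lam σ) = 0 ∧
    ∀ τ ∈ sigmaSet q, (∑ᶠ σ ∈ NSet τ, lam σ) = -((2 ^ q : ℂ) / 2) * lam τ}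

/-- `V_2`, the "negative" part of the diagonal sector. -/
def V2diag (q : ℕ) : Submodule ℂ (BMat q) :=
  Submodule.span ℂ {v | ∃ lam : Mat q → ℂ,
    v = ∑ᶠ σ ∈ sigmaSet q, lam σ • (σ ⊗ₖ σ) ∧
    (∑ᶠ σ ∈ sigmaSet q, lam σ) = 0 ∧
    ∀ τ ∈ sigmaSet q, (∑ᶠ σ ∈ NSet τ, lam σ) = ((2 ^ q : ℂ) / 2) * lam τ}

/-- `v^[adj]_τ = (2|C_τ|)^{-1/2} Σ_{σ∈C_τ} S_{σ,σ·τ}`. -/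
def vadjS {q : ℕ} (τ : Mat q) : BMat q :=
  ((Real.sqrt (2 * ((CSet τ).ncard : ℝ)) : ℂ))⁻¹ • ∑ᶠ σ ∈ CSet τ, SVec σ (nprod σ τ)

/-- `v^{adj}_τ = (2|N_τ|)^{-1/2} Σ_{σ∈N_τ} A_{σ,iσ·τ}`. -/
def vadjA {q : ℕ} (τ : Mat q) : BMat q :=
  ((Real.sqrt (2 * ((NSet τ).ncard : ℝ)) : ℂ))⁻¹ •
    ∑ᶠ σ ∈ NSet τ, AVec σ (Complex.I • nprod σ τ)

/-- The symmetric adjoint sector `V_[adj]`. -/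
def VadjS (q : ℕ) : Submodule ℂ (BMat q) :=
  Submodule.span ℂ {M | ∃ τ ∈ sigmaSet q, M = vadjS τ}

/-- The antisymmetric adjoint sector `V_{adj}`. -/
def VadjA (q : ℕ) : Submodule ℂ (BMat q) :=
  Submodule.span ℂ {M | ∃ τ ∈ sigmaSet q, M = vadjA τ}

/-- The orthogonal complement `V^⊥_{adj}` of `V_{adj}` inside `V_{A}`. -/
def VadjAperp (q : ℕ) : Submodule ℂ (BMat q) :=
  Submodule.span ℂ {v | v ∈ VAanti q ∧ ∀ w ∈ VadjA q, hs w v = 0}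

/-- `V_{1}^τ`. -/
def V1symτ (q : ℕ) (τ : Mat q) : Submodule ℂ (BMat q) :=
  Submodule.span ℂ {v | ∃ lam : Mat q → ℂ,
    v = ∑ᶠ σ ∈ NSet τ, lam σ • SVec σ (Complex.I • nprod σ τ) ∧
    ∀ ν ∈ NSet τ, (∑ᶠ σ ∈ NSet τ ∩ CSet ν, lam σ) - (∑ᶠ σ ∈ NSet τ ∩ NSet ν, lam σ)
      = ((2 ^ q : ℂ) / 2) * lam ν}

/-- `V_{2}^τ`. -/
def V2symτ (q : ℕ) (τ : Mat q) : Submodule ℂ (BMat q) :=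
  Submodule.span ℂ {v | ∃ lam : Mat q → ℂ,
    v = ∑ᶠ σ ∈ NSet τ, lam σ • SVec σ (Complex.I • nprod σ τ) ∧
    ∀ ν ∈ NSet τ, (∑ᶠ σ ∈ NSet τ ∩ CSet ν, lam σ) - (∑ᶠ σ ∈ NSet τ ∩ NSet ν, lam σ)
      = -((2 ^ q : ℂ) / 2) * lam ν}

/-- `V_{1} = ⊕_τ V_{1}^τ`. -/
def V1sym (q : ℕ) : Submodule ℂ (BMat q) := ⨆ τ ∈ sigmaSet q, V1symτ q τ

/-- `V_{2} = ⊕_τ V_{2}^τ`. -/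
def V2sym (q : ℕ) : Submodule ℂ (BMat q) := ⨆ τ ∈ sigmaSet q, V2symτ q τ

/-- The defining property of the map `Θ` on `V_[A]`. -/
def ThetaProp (q : ℕ) (Θ : BMat q →ₗ[ℂ] BMat q) : Prop :=
  ∀ τ ∈ sigmaSet q, ∀ σ ∈ CSet τ,
    Θ (AVec σ (nprod σ τ)) =
      (∑ᶠ σ' ∈ NSet τ ∩ CSet σ, AVec σ' (Complex.I • nprod σ' τ)) -
      ∑ᶠ σ' ∈ NSet τ ∩ NSet σ, AVec σ' (Complex.I • nprod σ' τ)

/-- `V` = span of off-diagonal products `σ⊗σ̂`, `σ ≠ σ̂`. -/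
def Voff (q : ℕ) : Submodule ℂ (BMat q) :=
  Submodule.span ℂ {M | ∃ σ ∈ sigmaSet q, ∃ σ' ∈ sigmaSet q, σ ≠ σ' ∧ M = σ ⊗ₖ σ'}

/-- `V^τ` = span of the `σ⊗σ̂` with `σ·σ̂ ∈ {τ, −τ, iτ, −iτ}`. -/
def Vtau (q : ℕ) (τ : Mat q) : Submodule ℂ (BMat q) :=
  Submodule.span ℂ {M | ∃ σ ∈ sigmaSet q, ∃ σ' ∈ sigmaSet q,
    (nprod σ σ' = τ ∨ nprod σ σ' = -τ ∨ nprod σ σ' = Complex.I • τ ∨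
      nprod σ σ' = -(Complex.I • τ)) ∧ M = σ ⊗ₖ σ'}

/-!
Up to phases, multiplication of Pauli operators is addition of labels in `𝔽₂^(2q)`, and two of
them commute or anticommute according to a bicharacter of the labels. For fixed `τ`, the map `Θ`
is, up to the factor `i`, the Fourier transform from the labels commuting with `τ` to those
anticommuting with `τ`. Including the labels of `σ₀` and `τ`, whose vectors `A_{σ₀,τ}` and
`A_{τ,σ₀}` are opposite and are sent to multiples of `v^{adj}_τ`, it scales inner products by
`4 ^ q` by orthogonality of characters, and is onto `V_{A}` by Fourier inversion. Since `V_[A]` is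
orthogonal to all `A_{σ₀,τ}`, its image is orthogonal to `V_{adj}` and together with `V_{adj}`
spans `V_{A}`, so it is `V^⊥_{adj}`.
-/

section PiKronecker

variable {ι n R : Type*} [Fintype ι] [CommSemiring R]

/-- The Kronecker product of a finite family of square matrices, indexed by `ι → n`; it lets
the facts about `PauliOp` be read off from the single-qubit matrices. -/
def piKronecker (A : ι → Matrix n n R) : Matrix (ι → n) (ι → n) R :=
  Matrix.of fun x y => ∏ i, A i (x i) (y i)

lemma piKronecker_mul [DecidableEq ι] [Fintype n] (A B : ι → Matrix n n R) :
    piKronecker A * piKronecker B = piKronecker fun i => A i * B i := by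
  ext x y
  simp only [piKronecker, Matrix.mul_apply, Matrix.of_apply, ← Finset.prod_mul_distrib,
    Finset.prod_univ_sum, Fintype.piFinset_univ]

lemma piKronecker_smul (c : ι → R) (A : ι → Matrix n n R) :
    (piKronecker fun i => c i • A i) = (∏ i, c i) • piKronecker A := by
  ext x y
  simp only [piKronecker, Matrix.of_apply, Matrix.smul_apply, smul_eq_mul,
    Finset.prod_mul_distrib]

lemma piKronecker_one [DecidableEq n] :
    piKronecker (1 : ι → Matrix n n R) = 1 := by
  ext x y
  simp only [piKronecker, Matrix.of_apply, Pi.one_apply, Matrix.one_apply, Finset.prod_ite_zero,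
    Finset.mem_univ, true_imp_iff, Finset.prod_const_one, funext_iff]

lemma trace_piKronecker [DecidableEq ι] [Fintype n] (A : ι → Matrix n n R) :
    (piKronecker A).trace = ∏ i, (A i).trace := by
  simp only [Matrix.trace, Matrix.diag_apply, piKronecker, Matrix.of_apply,
    Finset.prod_univ_sum, Fintype.piFinset_univ]

lemma conjTranspose_piKronecker [StarRing R] (A : ι → Matrix n n R) :
    (piKronecker A)ᴴ = piKronecker fun i => (A i)ᴴ := by
  ext x y
  simp only [piKronecker, Matrix.conjTranspose_apply, Matrix.of_apply, star_prod]

end PiKronecker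

section SingleQubit

/-- The label in `Fin 4` of the single-qubit Pauli matrix proportional to `X ^ x.1 * Z ^ x.2`.
With labels in `ZMod 2 × ZMod 2`, multiplication of Pauli matrices up to phases is addition of
labels. -/
def qubitIndex (x : ZMod 2 × ZMod 2) : Fin 4 := ![![0, 3], ![1, 2]] x.1 x.2

lemma qubitIndex_surjective : Function.Surjective qubitIndex := by decide

/-- The sign `±1` by which the single-qubit Pauli matrices labelled `x` and `y` commute. -/
def qubitSign (x y : ZMod 2 × ZMod 2) : ℂ := if x.1 * y.2 = x.2 * y.1 then 1 else -1

lemma qubitSign_comm (x y : ZMod 2 × ZMod 2) : qubitSign x y = qubitSign y x := by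
  simp only [qubitSign, mul_comm, eq_comm]

lemma qubitSign_self (x : ZMod 2 × ZMod 2) : qubitSign x x = 1 := by
  rw [qubitSign, if_pos (mul_comm _ _)]

lemma qubitSign_mul_self (x y : ZMod 2 × ZMod 2) : qubitSign x y * qubitSign x y = 1 := by
  unfold qubitSign; split_ifs <;> norm_num

lemma qubitSign_add (x y z : ZMod 2 × ZMod 2) :
    qubitSign x (y + z) = qubitSign x y * qubitSign x z := by
  have h : ∀ u v w : ZMod 2 × ZMod 2, u.1 * (v + w).2 = u.2 * (v + w).1 ↔
      (u.1 * v.2 = u.2 * v.1 ↔ u.1 * w.2 = u.2 * w.1) := by decide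
  simp only [qubitSign, h]
  split_ifs <;> simp_all

lemma exists_qubitSign_eq_neg_one {x : ZMod 2 × ZMod 2} (hx : x ≠ 0) :
    ∃ y, qubitSign x y = -1 := by
  have h : ∀ x : ZMod 2 × ZMod 2, x ≠ 0 → ∃ y : ZMod 2 × ZMod 2, x.1 * y.2 ≠ x.2 * y.1 := by
    decide
  exact (h x hx).imp fun y hy => if_neg hy

/-- The phase of the product of two single-qubit Pauli matrices, e.g. `X * Y = I • Z`. -/
def pauliPhase : Matrix (Fin 4) (Fin 4) ℂ :=
  !![1, 1, 1, 1;
    1, 1, Complex.I, -Complex.I;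
    1, -Complex.I, 1, Complex.I;
    1, Complex.I, -Complex.I, 1]

lemma qubitIndex_add :
    ∀ x y : ZMod 2 × ZMod 2, qubitIndex (x + y) = qubitIndex x ^^^ qubitIndex y := by
  decide

lemma pauli1_mul (j k : Fin 4) : pauli1 j * pauli1 k = pauliPhase j k • pauli1 (j ^^^ k) := by
  fin_cases j <;> fin_cases k <;> simp [pauli1, pauliPhase, Matrix.one_fin_two]

lemma pauliPhase_mul_self (j k : Fin 4) :
    pauliPhase j k * pauliPhase j k = if j = 0 ∨ k = 0 ∨ j = k then 1 else -1 := by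
  fin_cases j <;> fin_cases k <;> simp [pauliPhase]

lemma pauliPhase_qubitIndex_mul_self (x y : ZMod 2 × ZMod 2) :
    pauliPhase (qubitIndex x) (qubitIndex y) * pauliPhase (qubitIndex x) (qubitIndex y) =
      qubitSign x y := by
  have h : ∀ x y : ZMod 2 × ZMod 2, x.1 * y.2 = x.2 * y.1 ↔
      qubitIndex x = 0 ∨ qubitIndex y = 0 ∨ qubitIndex x = qubitIndex y := by decide
  simp only [pauliPhase_mul_self, qubitSign, h]

lemma pauli1_mul_self (k : Fin 4) : pauli1 k * pauli1 k = 1 := by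
  fin_cases k <;> simp [pauli1, Matrix.one_fin_two]

lemma conjTranspose_pauli1 (k : Fin 4) : (pauli1 k)ᴴ = pauli1 k := by
  fin_cases k <;> ext i j <;> fin_cases i <;> fin_cases j <;> simp [pauli1]

lemma trace_pauli1_qubitIndex {x : ZMod 2 × ZMod 2} (hx : x ≠ 0) :
    (pauli1 (qubitIndex x)).trace = 0 := by
  have h : ∀ x, x ≠ 0 → qubitIndex x ≠ 0 := by decide
  have htrace : ∀ k : Fin 4, k ≠ 0 → (pauli1 k).trace = 0 := by
    intro k; fin_cases k <;> simp [pauli1, Matrix.trace_fin_two]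
  exact htrace _ (h x hx)

end SingleQubit

section Labels

/-- Labels of `q`-qubit Pauli operators: the `𝔽₂`-vector space `(𝔽₂ × 𝔽₂)^q`. -/
abbrev PauliLabel (q : ℕ) := Fin q → ZMod 2 × ZMod 2

variable {q : ℕ}

/-- The sign `±1` by which the Pauli operators labelled `t` and `a` commute, as a character
in `a`. -/
def commSign (t : PauliLabel q) : AddChar (PauliLabel q) ℂ where
  toFun a := ∏ i, qubitSign (t i) (a i)
  map_zero_eq_one' := by simp [qubitSign]
  map_add_eq_mul' a b := by
    simp only [Pi.add_apply, qubitSign_add, Finset.prod_mul_distrib]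

lemma commSign_apply (t a : PauliLabel q) : commSign t a = ∏ i, qubitSign (t i) (a i) := rfl

lemma commSign_comm (t a : PauliLabel q) : commSign t a = commSign a t := by
  simp only [commSign_apply, qubitSign_comm]

lemma commSign_self (t : PauliLabel q) : commSign t t = 1 := by
  simp only [commSign_apply, qubitSign_self, Finset.prod_const_one]

lemma commSign_zero_left (a : PauliLabel q) : commSign 0 a = 1 := by
  rw [commSign_comm, AddChar.map_zero_eq_one]

lemma commSign_add_left (s t a : PauliLabel q) :
    commSign (s + t) a = commSign s a * commSign t a := by
  simp only [commSign_comm _ a, AddChar.map_add_eq_mul]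

lemma commSign_mul_self (t a : PauliLabel q) : commSign t a * commSign t a = 1 := by
  simp only [commSign_apply, ← Finset.prod_mul_distrib, qubitSign_mul_self,
    Finset.prod_const_one]

lemma commSign_eq_one_or_neg_one (t a : PauliLabel q) :
    commSign t a = 1 ∨ commSign t a = -1 :=
  mul_self_eq_one_iff.1 (commSign_mul_self t a)

lemma star_commSign (t a : PauliLabel q) : star (commSign t a) = commSign t a := by
  rcases commSign_eq_one_or_neg_one t a with h | h <;> simp [h]

lemma commSign_eq_zero_iff (t : PauliLabel q) : commSign t = 0 ↔ t = 0 := by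
  refine ⟨fun h => ?_, fun h => by ext a; rw [h, commSign_zero_left]; rfl⟩
  by_contra ht
  obtain ⟨i, hi⟩ := Function.ne_iff.1 ht
  obtain ⟨y, hy⟩ := exists_qubitSign_eq_neg_one hi
  have hsingle : commSign t (Pi.single i y) = -1 := by
    rw [commSign_apply, Finset.prod_eq_single i (fun j _ hj => by simp [hj, qubitSign]) (by simp),
      Pi.single_eq_same, hy]
  rw [h, AddChar.zero_apply] at hsingle
  norm_num at hsingle

lemma sum_commSign (c : PauliLabel q) : ∑ b, commSign c b = if c = 0 then 4 ^ q else 0 := by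
  simp only [AddChar.sum_eq_ite, commSign_eq_zero_iff]
  simp

/-- The labels whose Pauli operators commute (`s = 1`) or anticommute (`s = -1`) with the Pauli
operator labelled `t`. -/
def signLabels (s : ℂ) (t : PauliLabel q) : Finset (PauliLabel q) :=
  {b | commSign t b = s}

lemma mem_signLabels {s : ℂ} {t b : PauliLabel q} : b ∈ signLabels s t ↔ commSign t b = s := by
  simp [signLabels]

-- The indicator function of `signLabels s t` is `b ↦ (1 + s * commSign t b) / 2`.
lemma sum_signLabels_commSign_mul {s : ℂ} (hs : s = 1 ∨ s = -1) (t a a' : PauliLabel q) :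
    ∑ b ∈ signLabels s t, commSign a b * commSign a' b =
      4 ^ q / 2 * ((if a = a' then 1 else 0) + s * if a' = a + t then 1 else 0) := by
  have hterm (b : PauliLabel q) :
      (if commSign t b = s then commSign a b * commSign a' b else 0) =
        (commSign (a + a') b + s * commSign (a + t + a') b) / 2 := by
    simp only [commSign_add_left]
    rcases hs with rfl | rfl <;> rcases commSign_eq_one_or_neg_one t b with h | h <;>
      norm_num [h]
  rw [signLabels, Finset.sum_filter, Finset.sum_congr rfl fun b _ => hterm b, ← Finset.sum_div,
    Finset.sum_add_distrib, ← Finset.mul_sum, sum_commSign, sum_commSign]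
  simp only [← ZModModule.sub_eq_add _ a', sub_eq_zero, eq_comm (a := a')]
  split_ifs <;> ring

end Labels

section PauliOperators

variable {q : ℕ}

lemma PauliOp_eq_piKronecker (k : Fin q → Fin 4) :
    PauliOp k = piKronecker fun i => pauli1 (k i) := rfl

lemma PauliOp_mul_self (k : Fin q → Fin 4) : PauliOp k * PauliOp k = 1 := by
  simp only [PauliOp_eq_piKronecker, piKronecker_mul, pauli1_mul_self]
  exact piKronecker_one

lemma sqrtd_mul_self (q : ℕ) : sqrtd q * sqrtd q = 2 ^ q := by
  rw [sqrtd, ← Complex.ofReal_mul, Real.mul_self_sqrt (by positivity)]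
  norm_num

lemma sqrtd_ne_zero (q : ℕ) : sqrtd q ≠ 0 := by
  rw [← mul_self_ne_zero, sqrtd_mul_self]
  exact pow_ne_zero q two_ne_zero

/-- The normalized Pauli operator with label `a`. -/
def pauli (a : PauliLabel q) : Mat q := (sqrtd q)⁻¹ • PauliOp fun i => qubitIndex (a i)

lemma range_pauli : Set.range pauli = sigmaHat q := by
  ext M
  refine ⟨fun ⟨a, ha⟩ => ⟨_, ha.symm⟩, fun ⟨k, hk⟩ => ?_⟩
  choose a ha using fun i => qubitIndex_surjective (k i)
  exact ⟨a, by simp only [pauli, ha, hk]⟩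

lemma pauli_zero : pauli 0 = sigma0 q := by
  rw [pauli, sigma0, PauliOp_eq_piKronecker]
  exact congrArg _ piKronecker_one

lemma conjTranspose_pauli (a : PauliLabel q) : (pauli a)ᴴ = pauli a := by
  simp only [pauli, Matrix.conjTranspose_smul, PauliOp_eq_piKronecker, conjTranspose_piKronecker,
    conjTranspose_pauli1]
  simp [sqrtd]

lemma pauli_mul_self (a : PauliLabel q) : pauli a * pauli a = (2 ^ q : ℂ)⁻¹ • 1 := by
  rw [pauli, Matrix.smul_mul, Matrix.mul_smul, PauliOp_mul_self, smul_smul, ← mul_inv,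
    sqrtd_mul_self]

lemma trace_pauli {a : PauliLabel q} (ha : a ≠ 0) : (pauli a).trace = 0 := by
  obtain ⟨i, hi⟩ := Function.ne_iff.1 ha
  rw [pauli, Matrix.trace_smul, PauliOp_eq_piKronecker, trace_piKronecker,
    Finset.prod_eq_zero (Finset.mem_univ i) (trace_pauli1_qubitIndex hi), smul_zero]

lemma exists_nprod_pauli (a b : PauliLabel q) :
    ∃ c : ℂ, c * c = commSign a b ∧ nprod (pauli a) (pauli b) = c • pauli (a + b) := by
  refine ⟨∏ i, pauliPhase (qubitIndex (a i)) (qubitIndex (b i)), ?_, ?_⟩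
  · simp only [← Finset.prod_mul_distrib, pauliPhase_qubitIndex_mul_self, commSign_apply]
  · simp only [nprod, pauli, Matrix.smul_mul, Matrix.mul_smul, PauliOp_eq_piKronecker,
      piKronecker_mul, pauli1_mul, piKronecker_smul, ← qubitIndex_add, Pi.add_apply]
    rw [smul_inv_smul₀ (sqrtd_ne_zero q), smul_comm]

lemma star_mul_self_of_mul_self_eq_commSign {c : ℂ} {a b : PauliLabel q}
    (hc : c * c = commSign a b) : star c * c = 1 := by
  have hnorm : ‖c‖ ^ 2 = 1 := by
    rw [sq, ← norm_mul, hc]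
    rcases commSign_eq_one_or_neg_one a b with h | h <;> simp [h]
  rw [Complex.star_def, Complex.conj_mul', ← Complex.ofReal_pow, hnorm, Complex.ofReal_one]

lemma pauli_mul_comm (a b : PauliLabel q) :
    pauli a * pauli b = commSign a b • (pauli b * pauli a) := by
  obtain ⟨c, hc, hab⟩ := exists_nprod_pauli a b
  have hprod : pauli a * pauli b = ((sqrtd q)⁻¹ * c) • pauli (a + b) := by
    rw [mul_smul, ← hab, nprod, inv_smul_smul₀ (sqrtd_ne_zero q)]
  have hrev : pauli b * pauli a = ((sqrtd q)⁻¹ * star c) • pauli (a + b) := by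
    rw [← conjTranspose_pauli a, ← conjTranspose_pauli b, ← Matrix.conjTranspose_mul,
      hprod, Matrix.conjTranspose_smul, conjTranspose_pauli]
    simp [sqrtd]
  rw [hprod, hrev, smul_smul, ← hc]
  congr 1
  linear_combination (-(sqrtd q)⁻¹ * c) * star_mul_self_of_mul_self_eq_commSign hc

lemma trace_pauli_mul_pauli (a b : PauliLabel q) :
    (pauli a * pauli b).trace = if a = b then 1 else 0 := by
  split_ifs with h
  · rw [h, pauli_mul_self, Matrix.trace_smul, Matrix.trace_one]
    simp
  · obtain ⟨c, -, hab⟩ := exists_nprod_pauli a b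
    have hne : a + b ≠ 0 := by rwa [← ZModModule.sub_eq_add, sub_ne_zero]
    have htrace : sqrtd q * (pauli a * pauli b).trace = 0 := by
      rw [← smul_eq_mul, ← Matrix.trace_smul, ← nprod, hab, Matrix.trace_smul, trace_pauli hne,
        smul_zero]
    exact (mul_eq_zero.1 htrace).resolve_left (sqrtd_ne_zero q)

lemma pauli_injective : Function.Injective (pauli (q := q)) := by
  intro a b h
  have hab := trace_pauli_mul_pauli a b
  rw [h, trace_pauli_mul_pauli, if_pos rfl] at hab
  by_contra hne
  simp [hne] at hab

lemma pauli_mul_pauli_ne_zero (a b : PauliLabel q) : pauli a * pauli b ≠ 0 := by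
  intro h
  have hzero : pauli a * pauli a * (pauli b * pauli b) = 0 := by
    rw [mul_assoc, ← mul_assoc (pauli a) (pauli b), h, zero_mul, mul_zero]
  simp [pauli_mul_self] at hzero

lemma pauli_anticommute_iff (a t : PauliLabel q) :
    pauli a * pauli t + pauli t * pauli a = 0 ↔ commSign t a = -1 := by
  rw [pauli_mul_comm a t, commSign_comm, add_eq_zero_iff_eq_neg]
  exact (smul_left_injective ℂ (pauli_mul_pauli_ne_zero t a)).eq_iff' (neg_one_smul ℂ _)

lemma pauli_commute_iff (a t : PauliLabel q) :
    pauli a * pauli t = pauli t * pauli a ↔ commSign t a = 1 := by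
  rw [pauli_mul_comm a t, commSign_comm]
  exact (smul_left_injective ℂ (pauli_mul_pauli_ne_zero t a)).eq_iff' (one_smul ℂ _)

lemma mem_sigmaSet_iff {M : Mat q} : M ∈ sigmaSet q ↔ ∃ a ≠ 0, pauli a = M := by
  rw [sigmaSet, ← range_pauli, ← pauli_zero]
  constructor
  · rintro ⟨⟨a, rfl⟩, ha⟩
    exact ⟨a, ne_of_apply_ne pauli ha, rfl⟩
  · rintro ⟨a, ha, rfl⟩
    exact ⟨⟨a, rfl⟩, pauli_injective.ne ha⟩

lemma NSet_pauli (t : PauliLabel q) : NSet (pauli t) = pauli '' signLabels (-1) t := by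
  ext M
  constructor
  · rintro ⟨hM, hanti⟩
    obtain ⟨a, -, rfl⟩ := mem_sigmaSet_iff.1 hM
    exact ⟨a, mem_signLabels.2 ((pauli_anticommute_iff a t).1 hanti), rfl⟩
  · rintro ⟨a, ha, rfl⟩
    have ha := mem_signLabels.1 ha
    refine ⟨mem_sigmaSet_iff.2 ⟨a, ?_, rfl⟩, (pauli_anticommute_iff a t).2 ha⟩
    rintro rfl
    norm_num [AddChar.map_zero_eq_one] at ha

lemma CSet_pauli (t : PauliLabel q) :
    CSet (pauli t) = pauli '' {a | a ≠ 0 ∧ a ≠ t ∧ commSign t a = 1} := by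
  ext M
  constructor
  · rintro ⟨hM, hne, hcomm⟩
    obtain ⟨a, ha, rfl⟩ := mem_sigmaSet_iff.1 hM
    exact ⟨a, ⟨ha, ne_of_apply_ne pauli hne, (pauli_commute_iff a t).1 hcomm⟩, rfl⟩
  · rintro ⟨a, ⟨ha, hne, hcomm⟩, rfl⟩
    exact ⟨mem_sigmaSet_iff.2 ⟨a, ha, rfl⟩, pauli_injective.ne hne,
      (pauli_commute_iff a t).2 hcomm⟩

end PauliOperators

section HilbertSchmidt

variable {q : ℕ}

/-- The Hilbert–Schmidt inner product `hs` as a sesquilinear form. -/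
def hsForm (q : ℕ) : BMat q →ₗ⋆[ℂ] BMat q →ₗ[ℂ] ℂ :=
  LinearMap.mk₂'ₛₗ (starRingEnd ℂ) (RingHom.id ℂ) hs
    (fun A B C => by simp [hs, Matrix.add_mul]) (fun c A B => by simp [hs])
    (fun A B C => by simp [hs, Matrix.mul_add]) (fun c A B => by simp [hs])

lemma hsForm_apply (A B : BMat q) : hsForm q A B = hs A B := rfl

open scoped ComplexOrder in
lemma eq_zero_of_hsForm_self {A : BMat q} (h : hsForm q A A = 0) : A = 0 :=
  Matrix.trace_conjTranspose_mul_self_eq_zero_iff.1 h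

lemma disjoint_orthogonalBilin_hsForm (U : Submodule ℂ (BMat q)) :
    Disjoint U (U.orthogonalBilin (hsForm q)) :=
  Submodule.disjoint_def.2 fun x hx hperp => eq_zero_of_hsForm_self (hperp x hx)

lemma VadjAperp_eq_inf_orthogonalBilin :
    VadjAperp q = VAanti q ⊓ (VadjA q).orthogonalBilin (hsForm q) :=
  Submodule.span_eq (VAanti q ⊓ (VadjA q).orthogonalBilin (hsForm q))

lemma hsForm_kronecker_pauli (a b c d : PauliLabel q) :
    hsForm q (pauli a ⊗ₖ pauli b) (pauli c ⊗ₖ pauli d) =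
      (if a = c then 1 else 0) * if b = d then 1 else 0 := by
  rw [hsForm_apply, hs, Matrix.conjTranspose_kronecker, conjTranspose_pauli, conjTranspose_pauli,
    ← Matrix.mul_kronecker_mul, Matrix.trace_kronecker, trace_pauli_mul_pauli,
    trace_pauli_mul_pauli]

lemma AVec_smul_right (c : ℂ) (M N : Mat q) : AVec M (c • N) = c • AVec M N := by
  rw [AVec, AVec, Matrix.kronecker_smul, Matrix.smul_kronecker, ← smul_sub, smul_comm]

lemma AVec_swap (M N : Mat q) : AVec M N = -AVec N M := by
  rw [AVec, AVec, ← smul_neg, neg_sub]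

lemma hsForm_AVec_pauli (a b c d : PauliLabel q) :
    hsForm q (AVec (pauli a) (pauli b)) (AVec (pauli c) (pauli d)) =
      ((if a = c then 1 else 0) * if b = d then 1 else 0) -
        (if a = d then 1 else 0) * if b = c then 1 else 0 := by
  have hsqrt : ((Real.sqrt 2 : ℂ))⁻¹ * ((Real.sqrt 2 : ℂ))⁻¹ = 1 / 2 := by
    rw [← mul_inv, ← Complex.ofReal_mul, Real.mul_self_sqrt zero_le_two]
    norm_num
  simp only [AVec, map_smulₛₗ, LinearMap.smul_apply, map_sub, LinearMap.sub_apply,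
    hsForm_kronecker_pauli, smul_eq_mul, map_inv₀, Complex.conj_ofReal, RingHom.id_apply]
  linear_combination (2 * ((if a = c then 1 else 0) * if b = d then 1 else 0) -
        2 * (if a = d then 1 else 0) * if b = c then 1 else 0) * hsqrt

end HilbertSchmidt

section PairVectors

variable {q : ℕ}

/-- The vector `A_{σ,σ·τ}`, where `τ` and `σ` are the normalized Pauli operators labelled `t`
and `a`. -/
def pairVec (t a : PauliLabel q) : BMat q := AVec (pauli a) (nprod (pauli a) (pauli t))

lemma exists_pairVec_eq_smul (t a : PauliLabel q) :
    ∃ c : ℂ, c * c = commSign t a ∧ pairVec t a = c • AVec (pauli a) (pauli (a + t)) := by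
  obtain ⟨c, hc, hprod⟩ := exists_nprod_pauli a t
  exact ⟨c, by rw [hc, commSign_comm], by rw [pairVec, hprod, AVec_smul_right]⟩

lemma AVec_I_smul_nprod (t a : PauliLabel q) :
    AVec (pauli a) (Complex.I • nprod (pauli a) (pauli t)) = Complex.I • pairVec t a :=
  AVec_smul_right _ _ _

lemma pairVec_add (t a : PauliLabel q) : pairVec t (a + t) = -(commSign t a • pairVec t a) := by
  obtain ⟨c, hc, hprod⟩ := exists_nprod_pauli a t
  have hc4 : c * commSign t a * c = 1 := by
    rw [mul_right_comm, hc, commSign_comm t a, commSign_mul_self]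
  have hc0 : c ≠ 0 := right_ne_zero_of_mul_eq_one hc4
  -- Multiplying `nprod (pauli a) (pauli t) = c • pauli (a + t)` by `pauli t` once more.
  have hback : c • nprod (pauli (a + t)) (pauli t) = pauli a := by
    rw [nprod, smul_comm, ← Matrix.smul_mul, ← hprod, nprod, Matrix.smul_mul, mul_assoc,
      pauli_mul_self, Matrix.mul_smul, mul_one, smul_smul, smul_smul, sqrtd_mul_self,
      mul_inv_cancel₀ (pow_ne_zero q two_ne_zero), one_smul]
  refine smul_right_injective _ hc0 ?_
  calc c • pairVec t (a + t) = -AVec (pauli a) (pauli (a + t)) := by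
        rw [pairVec, ← AVec_smul_right, hback, AVec_swap]
    _ = c • -(commSign t a • pairVec t a) := by
        rw [pairVec, hprod, AVec_smul_right, smul_neg, smul_smul, smul_smul, hc4, one_smul]

lemma hsForm_pairVec_self (t a : PauliLabel q) :
    hsForm q (pairVec t a) (pairVec t a) = if t = 0 then 0 else 1 := by
  obtain ⟨c, hc, hvec⟩ := exists_pairVec_eq_smul t a
  have hunit : starRingEnd ℂ c * c = 1 := star_mul_self_of_mul_self_eq_commSign hc
  rw [hvec, LinearMap.map_smulₛₗ₂, map_smul, hsForm_AVec_pauli, smul_eq_mul, smul_eq_mul,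
    ← mul_assoc, hunit]
  simp only [left_eq_add, add_eq_left]
  split_ifs <;> simp

lemma hsForm_pairVec_eq_zero {t a t' a' : PauliLabel q}
    (h : t = t' → a' ≠ a ∧ a' ≠ a + t) :
    hsForm q (pairVec t a) (pairVec t' a') = 0 := by
  obtain ⟨c, -, hvec⟩ := exists_pairVec_eq_smul t a
  obtain ⟨c', -, hvec'⟩ := exists_pairVec_eq_smul t' a'
  have hsame : ¬(a = a' ∧ a + t = a' + t') := by
    rintro ⟨rfl, ht⟩
    exact (h (add_left_cancel ht)).1 rfl
  have hswap : ¬(a = a' + t' ∧ a + t = a') := by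
    rintro ⟨ha, rfl⟩
    refine (h ?_).2 rfl
    rwa [add_assoc, left_eq_add, ← ZModModule.sub_eq_add, sub_eq_zero] at ha
  rw [hvec, hvec', LinearMap.map_smulₛₗ₂, map_smul, hsForm_AVec_pauli,
    ite_zero_mul_ite_zero, ite_zero_mul_ite_zero, if_neg hsame, if_neg hswap, sub_zero, smul_zero,
    smul_zero]

lemma hsForm_pairVec (t a t' a' : PauliLabel q) :
    hsForm q (pairVec t a) (pairVec t' a') =
      if t = t' then (if a = a' then 1 else 0) - commSign t a * (if a' = a + t then 1 else 0)
      else 0 := by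
  split_ifs with ht haa hat hat
  · obtain rfl : t = 0 := by rwa [haa, left_eq_add] at hat
    rw [← ht, ← haa, hsForm_pairVec_self, if_pos rfl, commSign_zero_left, mul_one, sub_self]
  · have ht0 : t ≠ 0 := by rintro rfl; exact hat (by rw [haa, add_zero])
    rw [← ht, ← haa, hsForm_pairVec_self, if_neg ht0, mul_zero, sub_zero]
  · have ht0 : t ≠ 0 := by rintro rfl; exact haa (by rw [hat, add_zero])
    rw [← ht, hat, pairVec_add, map_neg, map_smul, hsForm_pairVec_self, if_neg ht0, smul_eq_mul,
      zero_sub]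
  · rw [hsForm_pairVec_eq_zero fun _ => ⟨Ne.symm haa, hat⟩, mul_zero, sub_zero]
  · exact hsForm_pairVec_eq_zero fun h => absurd h ht

end PairVectors

section FourierVectors

variable {q : ℕ}

/-- The image of `pairVec t a` under `Θ`: up to the factor `i`, the Fourier transform of
`b ↦ pairVec t b` over the labels `b` anticommuting with `t`. For `a = 0` it is a multiple of
`vadjA`. -/
def fourierVec (t a : PauliLabel q) : BMat q :=
  Complex.I • ∑ b ∈ signLabels (-1) t, commSign a b • pairVec t b

lemma fourierVec_self (t : PauliLabel q) : fourierVec t t = -fourierVec t 0 := by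
  rw [fourierVec, fourierVec, ← smul_neg, ← Finset.sum_neg_distrib]
  refine congrArg _ (Finset.sum_congr rfl fun b hb => ?_)
  rw [mem_signLabels.1 hb, commSign_zero_left, one_smul, neg_one_smul]

lemma hsForm_pairVec_fourierVec {t b a : PauliLabel q} (hb : commSign t b = -1)
    (ha : commSign t a = 1) :
    hsForm q (pairVec t b) (fourierVec t a) = 2 * Complex.I * commSign a b := by
  have hbt : commSign t (b + t) = -1 := by
    rw [AddChar.map_add_eq_mul, commSign_self, mul_one, hb]
  have hterm (b' : PauliLabel q) : commSign a b' * hsForm q (pairVec t b) (pairVec t b') =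
      (if b = b' then commSign a b' else 0) + if b' = b + t then commSign a b' else 0 := by
    rw [hsForm_pairVec, if_pos rfl, hb]
    split_ifs <;> ring
  rw [fourierVec, map_smul, map_sum]
  simp only [map_smul, smul_eq_mul, hterm, Finset.sum_add_distrib]
  rw [Finset.sum_ite_eq, Finset.sum_ite_eq', if_pos (mem_signLabels.2 hb),
    if_pos (mem_signLabels.2 hbt), AddChar.map_add_eq_mul, commSign_comm a t, ha]
  ring

lemma hsForm_pairVec_fourierVec_of_ne {t t' : PauliLabel q} (ht : t ≠ t') (b a : PauliLabel q) :
    hsForm q (pairVec t b) (fourierVec t' a) = 0 := by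
  rw [fourierVec, map_smul, map_sum]
  simp only [map_smul, hsForm_pairVec, if_neg ht, smul_zero, Finset.sum_const_zero]

lemma hsForm_fourierVec {t a t' a' : PauliLabel q} (ha : commSign t a = 1)
    (ha' : commSign t' a' = 1) :
    hsForm q (fourierVec t a) (fourierVec t' a') =
      4 ^ q * hsForm q (pairVec t a) (pairVec t' a') := by
  have hexpand (y : BMat q) : hsForm q (fourierVec t a) y =
      -Complex.I * ∑ b ∈ signLabels (-1) t, commSign a b * hsForm q (pairVec t b) y := by
    simp only [fourierVec, map_sum, LinearMap.map_smulₛₗ₂, LinearMap.sum_apply,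
      ← Complex.star_def, star_commSign, smul_eq_mul]
    simp
  rcases eq_or_ne t t' with rfl | ht
  · have hterm (b : PauliLabel q) (hb : b ∈ signLabels (-1) t) :
        commSign a b * hsForm q (pairVec t b) (fourierVec t a') =
          2 * Complex.I * (commSign a b * commSign a' b) := by
      rw [hsForm_pairVec_fourierVec (mem_signLabels.1 hb) ha', mul_left_comm]
    rw [hexpand, Finset.sum_congr rfl hterm, ← Finset.mul_sum,
      sum_signLabels_commSign_mul (Or.inr rfl), hsForm_pairVec, if_pos rfl, ha]
    linear_combination (-(4 : ℂ) ^ q * ((if a = a' then 1 else 0) - if a' = a + t then 1 else 0)) *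
      Complex.I_mul_I
  · simp only [hexpand, hsForm_pairVec_fourierVec_of_ne ht, hsForm_pairVec, if_neg ht, mul_zero,
      Finset.sum_const_zero]

-- Fourier inversion; the two labels `b` and `b + t` contribute equally to the sum.
lemma sum_commSign_smul_fourierVec {t b : PauliLabel q} (hb : commSign t b = -1) :
    ∑ a ∈ signLabels 1 t, commSign a b • fourierVec t a = (Complex.I * 4 ^ q) • pairVec t b := by
  have hbt : commSign t (b + t) = -1 := by
    rw [AddChar.map_add_eq_mul, commSign_self, mul_one, hb]
  have hcoeff (b' : PauliLabel q) : ∑ a ∈ signLabels 1 t, commSign a b * commSign a b' =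
      4 ^ q / 2 * ((if b = b' then 1 else 0) + if b' = b + t then 1 else 0) := by
    simp only [fun a => commSign_comm a b, fun a => commSign_comm a b']
    rw [sum_signLabels_commSign_mul (Or.inl rfl), one_mul]
  calc ∑ a ∈ signLabels 1 t, commSign a b • fourierVec t a
    _ = Complex.I • ∑ b' ∈ signLabels (-1) t,
          (∑ a ∈ signLabels 1 t, commSign a b * commSign a b') • pairVec t b' := by
        simp only [fourierVec, smul_comm _ Complex.I, ← Finset.smul_sum]
        simp only [Finset.smul_sum, Finset.sum_smul, mul_smul]
        rw [Finset.sum_comm]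
    _ = (Complex.I * (4 ^ q / 2)) • (pairVec t b + pairVec t (b + t)) := by
        simp only [hcoeff, mul_smul, add_smul, ← Finset.smul_sum, Finset.sum_add_distrib,
          ite_smul, one_smul, zero_smul, Finset.sum_ite_eq, Finset.sum_ite_eq', mem_signLabels,
          hb, hbt, if_true]
    _ = (Complex.I * 4 ^ q) • pairVec t b := by
        rw [pairVec_add, hb, neg_one_smul, neg_neg, ← two_smul ℂ, smul_smul, mul_assoc,
          div_mul_cancel₀ _ two_ne_zero]

end FourierVectors

section Sectors

variable {q : ℕ}

lemma NSet_inter_CSet_pauli {t a : PauliLabel q} (ha : commSign t a = 1) :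
    NSet (pauli t) ∩ CSet (pauli a) =
      pauli '' {b ∈ signLabels (-1) t | commSign a b = 1} := by
  rw [NSet_pauli, CSet_pauli, ← Set.image_inter pauli_injective]
  refine congrArg _ (Set.ext fun b => ?_)
  simp only [Set.mem_inter_iff, Finset.mem_coe, Set.mem_ofPred_eq]
  refine and_congr_right fun hb => ⟨fun h => h.2.2, fun h => ⟨?_, ?_, h⟩⟩
  all_goals
    rw [mem_signLabels] at hb
    rintro rfl
  · norm_num [AddChar.map_zero_eq_one] at hb
  · norm_num [ha] at hb

lemma NSet_inter_NSet_pauli (t a : PauliLabel q) :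
    NSet (pauli t) ∩ NSet (pauli a) =
      pauli '' {b ∈ signLabels (-1) t | ¬commSign a b = 1} := by
  rw [NSet_pauli, NSet_pauli, ← Set.image_inter pauli_injective]
  refine congrArg _ (Set.ext fun b => ?_)
  rcases commSign_eq_one_or_neg_one a b with h | h <;> norm_num [mem_signLabels, h]

lemma finsum_image_pauli (t : PauliLabel q) (S : Finset (PauliLabel q)) :
    ∑ᶠ σ ∈ pauli '' S, AVec σ (Complex.I • nprod σ (pauli t)) =
      Complex.I • ∑ b ∈ S, pairVec t b := by
  rw [finsum_mem_image pauli_injective.injOn, finsum_mem_coe_finset, Finset.smul_sum]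
  simp only [AVec_I_smul_nprod]

lemma finsum_NSet (t : PauliLabel q) :
    ∑ᶠ σ ∈ NSet (pauli t), AVec σ (Complex.I • nprod σ (pauli t)) = fourierVec t 0 := by
  simp only [NSet_pauli, finsum_image_pauli, fourierVec, commSign_zero_left, one_smul]

lemma finsum_NSet_inter_CSet_sub_finsum_NSet_inter_NSet {t a : PauliLabel q}
    (ha : commSign t a = 1) :
    (∑ᶠ σ ∈ NSet (pauli t) ∩ CSet (pauli a), AVec σ (Complex.I • nprod σ (pauli t))) -
      ∑ᶠ σ ∈ NSet (pauli t) ∩ NSet (pauli a), AVec σ (Complex.I • nprod σ (pauli t)) =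
        fourierVec t a := by
  have hterm (b : PauliLabel q) : commSign a b • pairVec t b =
      if commSign a b = 1 then pairVec t b else -pairVec t b := by
    rcases commSign_eq_one_or_neg_one a b with h | h <;> norm_num [h]
  rw [NSet_inter_CSet_pauli ha, NSet_inter_NSet_pauli]
  have hpos := finsum_image_pauli t {b ∈ signLabels (-1) t | commSign a b = 1}
  have hneg := finsum_image_pauli t {b ∈ signLabels (-1) t | ¬commSign a b = 1}
  rw [Finset.coe_filter] at hpos hneg
  rw [hpos, hneg, fourierVec, Finset.sum_congr rfl fun b _ => hterm b, Finset.sum_ite,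
    Finset.sum_neg_distrib, ← sub_eq_add_neg, smul_sub]

/-- The labels `(t, a)` of the spanning vectors `A_{σ,σ·τ}`, `τ ∈ σ_q`, `σ ∈ C_τ`, of
`V_[A]`. -/
def commPairs (q : ℕ) : Set (PauliLabel q × PauliLabel q) :=
  {p | p.1 ≠ 0 ∧ p.2 ≠ 0 ∧ p.2 ≠ p.1 ∧ commSign p.1 p.2 = 1}

lemma VAcom'_eq_span : VAcom' q = Submodule.span ℂ ((fun p => pairVec p.1 p.2) '' commPairs q) := by
  rw [VAcom']
  congr 1
  ext M
  constructor
  · rintro ⟨τ, hτ, σ, hσ, rfl⟩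
    obtain ⟨t, ht, rfl⟩ := mem_sigmaSet_iff.1 hτ
    rw [CSet_pauli] at hσ
    obtain ⟨a, ha, rfl⟩ := hσ
    exact ⟨(t, a), ⟨ht, ha⟩, rfl⟩
  · rintro ⟨⟨t, a⟩, ⟨ht, ha⟩, rfl⟩
    exact ⟨pauli t, mem_sigmaSet_iff.2 ⟨t, ht, rfl⟩, pauli a,
      by rw [CSet_pauli]; exact ⟨a, ha, rfl⟩, rfl⟩

lemma pairVec_mem_VAanti {t b : PauliLabel q} (hb : commSign t b = -1) :
    pairVec t b ∈ VAanti q := by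
  obtain ⟨c, -, hvec⟩ := exists_pairVec_eq_smul t b
  have hbt : commSign (b + t) b = -1 := by rw [commSign_add_left, commSign_self, one_mul, hb]
  have hne : b + t ≠ 0 := by
    intro h
    norm_num [h, commSign_zero_left] at hbt
  rw [hvec]
  refine Submodule.smul_mem _ _ (Submodule.subset_span
    ⟨pauli (b + t), mem_sigmaSet_iff.2 ⟨_, hne, rfl⟩, pauli b, ?_, rfl⟩)
  rw [NSet_pauli]
  exact ⟨b, mem_signLabels.2 hbt, rfl⟩

lemma VAanti_le_iff {U : Submodule ℂ (BMat q)} :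
    VAanti q ≤ U ↔ ∀ t b, commSign t b = -1 → pairVec t b ∈ U := by
  refine ⟨fun h t b hb => h (pairVec_mem_VAanti hb), fun h => Submodule.span_le.2 ?_⟩
  rintro _ ⟨τ, hτ, σ, hσ, rfl⟩
  obtain ⟨t, -, rfl⟩ := mem_sigmaSet_iff.1 hτ
  rw [NSet_pauli] at hσ
  obtain ⟨b, hb, rfl⟩ := hσ
  obtain ⟨c, hc, hvec⟩ := exists_pairVec_eq_smul (b + t) b
  have hbt : commSign (b + t) b = -1 := by
    rw [commSign_add_left, commSign_self, one_mul, mem_signLabels.1 hb]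
  have hc0 : c ≠ 0 := by rintro rfl; norm_num [hbt] at hc
  rw [← add_assoc, ZModModule.add_self, zero_add] at hvec
  rw [SetLike.mem_coe, ← Submodule.smul_mem_iff U hc0, ← hvec]
  exact h _ _ hbt

lemma fourierVec_mem_VAanti (t a : PauliLabel q) : fourierVec t a ∈ VAanti q :=
  Submodule.smul_mem _ _ <| Submodule.sum_mem _ fun _ hb =>
    Submodule.smul_mem _ _ (pairVec_mem_VAanti (mem_signLabels.1 hb))

lemma VadjA_eq_span : VadjA q = Submodule.span ℂ ((fun t => fourierVec t 0) '' {0}ᶜ) := by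
  refine le_antisymm (Submodule.span_le.2 ?_) (Submodule.span_le.2 ?_)
  · rintro _ ⟨τ, hτ, rfl⟩
    obtain ⟨t, ht, rfl⟩ := mem_sigmaSet_iff.1 hτ
    rw [vadjA, finsum_NSet]
    exact Submodule.smul_mem _ _ (Submodule.subset_span ⟨t, ht, rfl⟩)
  · rintro _ ⟨t, ht, rfl⟩
    have hmem : vadjA (pauli t) ∈ VadjA q :=
      Submodule.subset_span ⟨_, mem_sigmaSet_iff.2 ⟨t, ht, rfl⟩, rfl⟩
    rw [vadjA, finsum_NSet] at hmem
    rcases (signLabels (-1) t).eq_empty_or_nonempty with hempty | hne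
    · simp [fourierVec, hempty]
    · refine (Submodule.smul_mem_iff _ (inv_ne_zero ?_)).1 hmem
      have hcard : (NSet (pauli t)).ncard ≠ 0 := by
        rw [NSet_pauli, Set.ncard_image_of_injective _ pauli_injective, Set.ncard_coe_finset]
        exact hne.card_ne_zero
      exact Complex.ofReal_ne_zero.2 (Real.sqrt_ne_zero'.2 (by positivity))

end Sectors

section Theta

variable {q : ℕ} {Θ : BMat q →ₗ[ℂ] BMat q}

lemma ThetaProp.map_pairVec (hΘ : ThetaProp q Θ) {t a : PauliLabel q}
    (h : (t, a) ∈ commPairs q) : Θ (pairVec t a) = fourierVec t a := by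
  rw [pairVec, hΘ _ (mem_sigmaSet_iff.2 ⟨t, h.1, rfl⟩) _ (by rw [CSet_pauli]; exact ⟨a, h.2, rfl⟩),
    finsum_NSet_inter_CSet_sub_finsum_NSet_inter_NSet h.2.2.2]

lemma ThetaProp.map_VAcom' (hΘ : ThetaProp q Θ) :
    (VAcom' q).map Θ = Submodule.span ℂ ((fun p => fourierVec p.1 p.2) '' commPairs q) := by
  rw [VAcom'_eq_span, Submodule.map_span, Set.image_image]
  exact congrArg _ (Set.image_congr fun p hp => hΘ.map_pairVec hp)

lemma ThetaProp.hsForm_map (hΘ : ThetaProp q Θ) {x y : BMat q} (hx : x ∈ VAcom' q)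
    (hy : y ∈ VAcom' q) : hsForm q (Θ x) (Θ y) = 4 ^ q * hsForm q x y := by
  rw [VAcom'_eq_span] at hx hy
  induction hx, hy using Submodule.span_induction₂ with
  | mem_mem x y hx hy =>
    obtain ⟨⟨t, a⟩, h, rfl⟩ := hx
    obtain ⟨⟨t', a'⟩, h', rfl⟩ := hy
    simp only [hΘ.map_pairVec h, hΘ.map_pairVec h', hsForm_fourierVec h.2.2.2 h'.2.2.2]
  | zero_left => simp
  | zero_right => simp
  | add_left x y z _ _ _ hxz hyz => simp only [map_add, LinearMap.add_apply, hxz, hyz, mul_add]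
  | add_right x y z _ _ _ hxy hxz => simp only [map_add, hxy, hxz, mul_add]
  | smul_left c x y _ _ hxy =>
    simp only [map_smul, LinearMap.map_smulₛₗ₂, hxy, mul_smul_comm]
  | smul_right c x y _ _ hxy => simp only [map_smul, hxy, mul_smul_comm]

lemma ThetaProp.eq_zero_of_map_eq_zero (hΘ : ThetaProp q Θ) {x : BMat q} (hx : x ∈ VAcom' q)
    (h : Θ x = 0) : x = 0 := by
  have hmul : 4 ^ q * hsForm q x x = 0 := by rw [← hΘ.hsForm_map hx hx, h, map_zero]
  exact eq_zero_of_hsForm_self ((mul_eq_zero.1 hmul).resolve_left (pow_ne_zero q (by norm_num)))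

lemma ThetaProp.map_VAcom'_le_orthogonalBilin (hΘ : ThetaProp q Θ) :
    (VAcom' q).map Θ ≤ (VadjA q).orthogonalBilin (hsForm q) := by
  rw [hΘ.map_VAcom', Submodule.span_le]
  rintro _ ⟨⟨t, a⟩, h, rfl⟩
  have hle : VadjA q ≤ LinearMap.ker ((hsForm q).flip (fourierVec t a)) := by
    rw [VadjA_eq_span, Submodule.span_le]
    rintro _ ⟨s, -, rfl⟩
    obtain ⟨-, ha0, hat, ha⟩ := h
    simp only [SetLike.mem_coe, LinearMap.mem_ker, LinearMap.flip_apply]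
    rw [hsForm_fourierVec (AddChar.map_zero_eq_one _) ha, hsForm_pairVec_eq_zero, mul_zero]
    rintro rfl
    exact ⟨ha0, by rwa [zero_add]⟩
  exact fun n hn => hle hn

lemma ThetaProp.VAanti_le (hΘ : ThetaProp q Θ) : VAanti q ≤ (VAcom' q).map Θ ⊔ VadjA q := by
  refine VAanti_le_iff.2 fun t b hb => ?_
  have ht : t ≠ 0 := by
    rintro rfl
    norm_num [commSign_zero_left] at hb
  have hadj : fourierVec t 0 ∈ VadjA q := by
    rw [VadjA_eq_span]
    exact Submodule.subset_span ⟨t, ht, rfl⟩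
  have hfourier (a : PauliLabel q) (ha : commSign t a = 1) :
      fourierVec t a ∈ (VAcom' q).map Θ ⊔ VadjA q := by
    by_cases ha0 : a = 0
    · exact Submodule.mem_sup_right (ha0 ▸ hadj)
    by_cases hat : a = t
    · exact Submodule.mem_sup_right (by rw [hat, fourierVec_self]; exact neg_mem hadj)
    · rw [hΘ.map_VAcom']
      exact Submodule.mem_sup_left (Submodule.subset_span ⟨(t, a), ⟨ht, ha0, hat, ha⟩, rfl⟩)
  have hscalar : Complex.I * 4 ^ q ≠ 0 :=
    mul_ne_zero Complex.I_ne_zero (pow_ne_zero q (by norm_num))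
  rw [← Submodule.smul_mem_iff _ hscalar, ← sum_commSign_smul_fourierVec hb]
  exact Submodule.sum_mem _ fun a ha =>
    Submodule.smul_mem _ _ (hfourier a (mem_signLabels.1 ha))

lemma ThetaProp.map_VAcom'_eq (hΘ : ThetaProp q Θ) : (VAcom' q).map Θ = VadjAperp q := by
  have hle : (VAcom' q).map Θ ≤ VAanti q := by
    rw [hΘ.map_VAcom', Submodule.span_le]
    rintro _ ⟨p, -, rfl⟩
    exact fourierVec_mem_VAanti p.1 p.2
  have hperp := hΘ.map_VAcom'_le_orthogonalBilin
  rw [VadjAperp_eq_inf_orthogonalBilin]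
  refine le_antisymm (le_inf hle hperp) ?_
  calc VAanti q ⊓ (VadjA q).orthogonalBilin (hsForm q)
    _ ≤ ((VAcom' q).map Θ ⊔ VadjA q) ⊓ (VadjA q).orthogonalBilin (hsForm q) :=
        inf_le_inf_right _ hΘ.VAanti_le
    _ = (VAcom' q).map Θ := by
        rw [sup_inf_assoc_of_le _ hperp, (disjoint_orthogonalBilin_hsForm _).eq_bot, sup_bot_eq]

end Theta

/-- `Θ` has trivial kernel on `V_[A]`, preserves orthogonality, and is a
linear isomorphism of `V_[A]` onto `V^⊥_{adj}`; in particular the dimensions agree. -/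
theorem statement9 (q : ℕ) (hq : 2 ≤ q)
    (Θ : BMat q →ₗ[ℂ] BMat q) (hΘ : ThetaProp q Θ) :
    (∀ x ∈ VAcom' q, Θ x = 0 → x = 0) ∧
    (∀ x ∈ VAcom' q, ∀ y ∈ VAcom' q, hs x y = 0 → hs (Θ x) (Θ y) = 0) ∧
    Submodule.map Θ (VAcom' q) = VadjAperp q ∧
    Module.finrank ℂ ↥(VadjAperp q) = Module.finrank ℂ ↥(VAcom' q) := by
  have hker : ∀ x ∈ VAcom' q, Θ x = 0 → x = 0 := fun _ hx => hΘ.eq_zero_of_map_eq_zero hx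
  have hinj : Function.Injective (Θ.domRestrict (VAcom' q)) :=
    (injective_iff_map_eq_zero _).2 fun x hx => Subtype.ext (hker x x.2 hx)
  refine ⟨hker, fun x hx y hy hxy => ?_, hΘ.map_VAcom'_eq, ?_⟩
  · rw [← hsForm_apply, hΘ.hsForm_map hx hy, hsForm_apply, hxy, mul_zero]
  · rw [← hΘ.map_VAcom'_eq, ← LinearMap.range_domRestrict, LinearMap.finrank_range_of_inj hinj]

end CliffordPaper
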